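/- Let n, r ∈ ℕ with n ≥ 3 and r ≥ 4, and let k ∈ ℕ₀. Then SD_k(C_n^r) ≥ SD_{k+r−1}(C_n) + (r−1)(n−1). Moreover, if D(C_n^r) = D*(C_n^r) (in particular, if n is a prime power) and r ≥ n − k, then SD_k(C_n^r) = D*(C_n^r). Additionally, for n ≥ 3 and k ∈ ℕ₀, SD_k(C_n^3) ≥ D*(C_n^3) − max{1, n − k − 2 − ⌊(−1 + √(1 + 8·max{n − 3 − k, 0}))/2⌋} (real square root, then integer floor). -/

import Mathlib

open Multiset

/-- A sequence (finite multiset) over `G` is zero-sumfree if every nonempty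
subsequence has nonzero sum. -/
def IsZeroSumfree {G : Type*} [AddCommMonoid G] (S : Multiset G) : Prop :=
  ∀ T ≤ S, T ≠ 0 → T.sum ≠ 0

/-- A minimal zero-sum sequence: a nonempty sequence with sum zero all of whose
nonempty proper subsequences have nonzero sum. -/
def IsMinimalZeroSum {G : Type*} [AddCommMonoid G] (S : Multiset G) : Prop :=
  S ≠ 0 ∧ S.sum = 0 ∧ ∀ T ≤ S, T ≠ 0 → T ≠ S → T.sum ≠ 0

/-- The cumulated multiplicity of level `ℓ` of a sequence:
`cm_ℓ(S) = Σ_{g ∈ G} max {0, v_g(S) − ℓ}`. -/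
noncomputable def cmul {G : Type*} [AddCommMonoid G] (ℓ : ℕ) (S : Multiset G) : ℕ :=
  letI := Classical.decEq G
  ∑ g ∈ S.toFinset, (S.count g - ℓ)

/-- `SD_{(k,ℓ)}(G)`: the maximum length of a minimal zero-sum sequence `S` over `G`
with `cm_ℓ(S) ≤ k`. -/
noncomputable def SDpair (G : Type*) [AddCommMonoid G] (k ℓ : ℕ) : ℕ :=
  sSup {m | ∃ S : Multiset G, IsMinimalZeroSum S ∧ cmul ℓ S ≤ k ∧ Multiset.card S = m}

/-- `SD_k(G)`: the `k`-th Strong Davenport constant. -/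
noncomputable def SDk (G : Type*) [AddCommMonoid G] (k : ℕ) : ℕ := SDpair G k 1

/-- The Strong Davenport constant `SD(G) = SD_0(G)`. -/
noncomputable def SD (G : Type*) [AddCommMonoid G] : ℕ := SDk G 0

/-- The Olson constant `Ol(G) = SD_1(G)`. -/
noncomputable def Ol (G : Type*) [AddCommMonoid G] : ℕ := SDk G 1

/-- `ol_k(G)`: the maximum length of a zero-sumfree sequence `S` over `G` with
`cm(S) ≤ k`. -/
noncomputable def olk (G : Type*) [AddCommMonoid G] (k : ℕ) : ℕ :=
  sSup {m | ∃ S : Multiset G, IsZeroSumfree S ∧ cmul 1 S ≤ k ∧ Multiset.card S = m}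

/-- `Ol_k(G)`: the smallest integer `ℓ` such that every sequence `S` over `G` with
`cm(S) ≤ k` and `|S| ≥ ℓ` has a nonempty zero-sum subsequence. -/
noncomputable def Olk (G : Type*) [AddCommMonoid G] (k : ℕ) : ℕ :=
  sInf {m | ∀ S : Multiset G, cmul 1 S ≤ k → m ≤ Multiset.card S →
    ∃ T, T ≤ S ∧ T ≠ 0 ∧ T.sum = 0}

/-- The Davenport constant `D(G)`: the maximum length of a minimal zero-sum
sequence over `G`. -/
noncomputable def DavenportD (G : Type*) [AddCommMonoid G] : ℕ :=
  sSup {m | ∃ S : Multiset G, IsMinimalZeroSum S ∧ Multiset.card S = m}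

/-! ### Auxiliary lemmas -/

theorem aux_le_add {α : Type*} {T U V : Multiset α} (h : T ≤ U + V) :
    ∃ T1 T2, T1 ≤ U ∧ T2 ≤ V ∧ T = T1 + T2 := by
  classical
  refine ⟨T ∩ U, T - U, Multiset.inter_le_right, ?_, ?_⟩
  · rw [tsub_le_iff_left]; exact h
  · ext a
    simp only [Multiset.count_add, Multiset.count_inter, Multiset.count_sub]
    omega

theorem aux_le_map {α β : Type*} (f : α → β) {T : Multiset β} {U : Multiset α}
    (h : T ≤ U.map f) : ∃ U', U' ≤ U ∧ T = U'.map f := by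
  classical
  induction U using Multiset.induction_on generalizing T with
  | empty => exact ⟨0, le_rfl, by simpa using h⟩
  | cons a U ih =>
    rw [Multiset.map_cons, ← Multiset.singleton_add] at h
    obtain ⟨T1, T2, h1, h2, rfl⟩ := aux_le_add h
    obtain ⟨U', hU', rfl⟩ := ih h2
    rcases Multiset.le_singleton.1 h1 with rfl | rfl
    · exact ⟨U', hU'.trans (Multiset.le_cons_self _ _), by simp⟩
    · exact ⟨a ::ₘ U', Multiset.cons_le_cons _ hU', by simp⟩

theorem aux_cmul_iff {G : Type*} [AddCommMonoid G] (S : Multiset G) (k : ℕ) :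
    cmul 1 S ≤ k ↔ ∃ D, D ≤ S ∧ D.Nodup ∧ Multiset.card S ≤ Multiset.card D + k := by
  let _ := Classical.decEq G
  have key : cmul 1 S + S.toFinset.card = Multiset.card S := by
    change (∑ g ∈ S.toFinset, (S.count g - 1)) + S.toFinset.card = Multiset.card S
    have h : Multiset.card S = ∑ g ∈ S.toFinset, S.count g :=
      (Multiset.toFinset_sum_count_eq S).symm
    rw [h, Finset.card_eq_sum_ones]
    rw [← Finset.sum_add_distrib]
    refine Finset.sum_congr rfl fun g hg => ?_
    have : 1 ≤ S.count g := Multiset.one_le_count_iff_mem.2 (Multiset.mem_toFinset.1 hg)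
    omega
  constructor
  · intro h
    refine ⟨S.dedup, Multiset.dedup_le S, Multiset.nodup_dedup S, ?_⟩
    have : S.toFinset.card = Multiset.card S.dedup := rfl
    omega
  · rintro ⟨D, hD, hn, hc⟩
    have : Multiset.card D ≤ S.toFinset.card := by
      rw [← Multiset.toFinset_card_of_nodup hn]
      exact Finset.card_le_card (Multiset.toFinset_subset.2 (Multiset.subset_of_le hD))
    omega

theorem aux_min_iff {G : Type*} [AddCommMonoid G] (S : Multiset G) :
    IsMinimalZeroSum S ↔ S ≠ 0 ∧ S.sum = 0 ∧ ∀ T ≤ S, T.sum = 0 → T = 0 ∨ T = S := by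
  unfold IsMinimalZeroSum
  refine and_congr_right fun _ => and_congr_right fun _ => forall_congr' fun T =>
    forall_congr' fun _ => ?_
  tauto

/-- Bound on the length of minimal zero-sum sequences. -/
theorem aux_card_le {G : Type*} [AddCommGroup G] [Finite G] (S : Multiset G)
    (hS : IsMinimalZeroSum S) : Multiset.card S ≤ Nat.card G := by
  classical
  have := Fintype.ofFinite G
  rw [aux_min_iff] at hS
  obtain ⟨h0, hs, hm⟩ := hS
  induction S using Quotient.inductionOn with
  | h l =>
  by_contra hlt
  push Not at hlt
  simp only [Multiset.quot_mk_to_coe, Multiset.coe_card, Nat.card_eq_fintype_card] at hlt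
  obtain ⟨i, j, hij, he⟩ := Fintype.exists_ne_map_eq_of_card_lt
    (fun i : Fin l.length => (l.take i).sum) (by simpa using hlt)
  wlog hlt' : i < j generalizing i j
  · exact this j i hij.symm he.symm (lt_of_le_of_ne (not_lt.1 hlt') hij.symm)
  have hlt2 : (i : ℕ) < j := hlt'
  have hjl := j.2
  have hsplit : l.take j = l.take i ++ (l.drop i).take (j - i) := by
    have := List.take_add (l := l) (i := i) (j := j - i)
    rwa [Nat.add_sub_cancel' hlt2.le] at this
  have hz : ((l.drop i).take (j - i)).sum = 0 := by
    rw [hsplit, List.sum_append] at he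
    simpa using he.symm
  have hlen : ((l.drop i).take (j - i)).length = j - i := by
    simp only [List.length_take, List.length_drop]
    omega
  have hle : (((l.drop i).take (j - i) : List G) : Multiset G) ≤ (l : Multiset G) :=
    Multiset.coe_le.2 ((List.take_sublist _ _).trans (List.drop_sublist _ _)).subperm
  rcases hm _ hle (by simpa using hz) with h | h
  · have := congrArg Multiset.card h
    simp only [Multiset.coe_card, hlen, Multiset.card_zero] at this
    omega
  · have := congrArg Multiset.card h
    simp only [Multiset.coe_card, hlen, Multiset.quot_mk_to_coe] at this
    omega

/-- Existence of a minimal zero-sum sequence of length `m` and cumulated multiplicity at most `k`. -/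
def AuxP (G : Type*) [AddCommMonoid G] (k m : ℕ) : Prop :=
  ∃ S D : Multiset G, IsMinimalZeroSum S ∧ D ≤ S ∧ D.Nodup ∧
    Multiset.card S ≤ Multiset.card D + k ∧ Multiset.card S = m

theorem aux_set {G : Type*} [AddCommMonoid G] (k : ℕ) :
    {m | ∃ S : Multiset G, IsMinimalZeroSum S ∧ cmul 1 S ≤ k ∧ Multiset.card S = m}
      = {m | AuxP G k m} := by
  ext m
  simp only [Set.mem_ofPred_eq, AuxP, aux_cmul_iff]
  constructor
  · rintro ⟨S, h1, ⟨D, h2, h3, h4⟩, h5⟩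
    exact ⟨S, D, h1, h2, h3, h4, h5⟩
  · rintro ⟨S, D, h1, h2, h3, h4, h5⟩
    exact ⟨S, h1, ⟨D, h2, h3, h4⟩, h5⟩

theorem aux_bdd {G : Type*} [AddCommGroup G] [Finite G] (k : ℕ) :
    BddAbove {m | AuxP G k m} := by
  refine ⟨Nat.card G, ?_⟩
  rintro m ⟨S, D, h1, -, -, -, rfl⟩
  exact aux_card_le S h1

theorem aux_le_SDk {G : Type*} [AddCommGroup G] [Finite G] {k m : ℕ} (h : AuxP G k m) :
    m ≤ SDk G k := by
  unfold SDk SDpair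
  rw [aux_set]
  exact le_csSup (aux_bdd k) h

theorem aux_SDk_mem {G : Type*} [AddCommGroup G] [Finite G] {k m : ℕ} (h : AuxP G k m) :
    AuxP G k (SDk G k) := by
  unfold SDk SDpair
  rw [aux_set]
  exact Nat.sSup_mem ⟨m, h⟩ (aux_bdd k)

theorem aux_transport {G H : Type*} [AddCommGroup G] [AddCommGroup H] (f : G →+ H)
    (hf : Function.Injective f) {k m : ℕ} (h : AuxP G k m) : AuxP H k m := by
  obtain ⟨S, D, h1, h2, h3, h4, h5⟩ := h
  refine ⟨S.map f, D.map f, ?_, Multiset.map_le_map h2, h3.map hf, by simpa using h4,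
    by simpa using h5⟩
  rw [aux_min_iff] at h1 ⊢
  obtain ⟨h0, hs, hm⟩ := h1
  refine ⟨by simpa using h0, by rw [← map_multiset_sum, hs, _root_.map_zero], ?_⟩
  intro T hT hT0
  obtain ⟨U, hU, rfl⟩ := aux_le_map f hT
  rw [← map_multiset_sum] at hT0
  have hU0 : U.sum = 0 := hf (by rw [hT0, _root_.map_zero])
  rcases hm U hU hU0 with rfl | rfl
  · left; simp
  · right; rfl

theorem aux_pick {G : Type*} {S D : Multiset G} {k : ℕ} (hS : S ≠ 0) (hD : D ≤ S) (hn : D.Nodup)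
    (hc : Multiset.card S ≤ Multiset.card D + (k + 1)) :
    ∃ g S' D', S = g ::ₘ S' ∧ D' ≤ S' ∧ D'.Nodup ∧
      Multiset.card S' ≤ Multiset.card D' + k := by
  classical
  obtain ⟨R, rfl⟩ := Multiset.le_iff_exists_add.1 hD
  rcases Multiset.empty_or_exists_mem R with rfl | ⟨g, hg⟩
  · obtain ⟨g, hg⟩ := Multiset.exists_mem_of_ne_zero hS
    obtain ⟨S', hS'⟩ := Multiset.exists_cons_of_mem hg
    rw [add_zero] at hS'
    subst hS'
    exact ⟨g, S', S', by simp, le_rfl, (Multiset.nodup_cons.1 hn).2, by omega⟩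
  · obtain ⟨R', rfl⟩ := Multiset.exists_cons_of_mem hg
    refine ⟨g, D + R', D, by simp, Multiset.le_add_right _ _, hn, ?_⟩
    simp at hc ⊢
    omega

/-- The replacement lemma: replace a part `M` of a minimal zero-sum sequence over `G` by
a sequence `W` over `G × K`. -/
theorem aux_replace {G K : Type*} [AddCommGroup G] [AddCommGroup K] {M S' D' : Multiset G}
    {k : ℕ} (hmin : IsMinimalZeroSum (M + S')) (hD : D' ≤ S') (hn : D'.Nodup)
    (hc : Multiset.card S' ≤ Multiset.card D' + k) (W : Multiset (G × K)) (hWn : W.Nodup)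
    (hW0 : W ≠ 0) (hWK : ∀ w ∈ W, w.2 ≠ 0) (hM0 : M ≠ 0)
    (hWs : W.sum = (M.sum, 0))
    (hW : ∀ T ≤ W, T.sum.2 = 0 → T = 0 ∨ T = W ∨
      ∃ M' ≤ M, M' ≠ 0 ∧ M' ≠ M ∧ T.sum.1 = M'.sum) :
    AuxP (G × K) k (Multiset.card S' + Multiset.card W) := by
  classical
  let f : G →+ G × K := AddMonoidHom.inl G K
  have hf : Function.Injective f := fun a b h => by simpa [f] using congrArg Prod.fst h
  rw [aux_min_iff] at hmin
  obtain ⟨-, hs, hm⟩ := hmin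
  refine ⟨S'.map f + W, D'.map f + W, ?_, by gcongr, ?_, by simp; omega, by simp⟩
  · rw [aux_min_iff]
    refine ⟨by simp [hW0], ?_, ?_⟩
    · rw [Multiset.sum_add, ← map_multiset_sum, hWs]
      rw [Multiset.sum_add] at hs
      ext
      · simp [f, add_comm, hs]
      · simp [f]
    · intro T hT hT0
      obtain ⟨T1, T2, h1, h2, rfl⟩ := aux_le_add hT
      obtain ⟨U, hU, rfl⟩ := aux_le_map f h1
      rw [Multiset.sum_add, ← map_multiset_sum] at hT0
      have e1 : U.sum + T2.sum.1 = 0 := by simpa [f] using congrArg Prod.fst hT0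
      have e2 : T2.sum.2 = 0 := by simpa [f] using congrArg Prod.snd hT0
      rcases hW T2 h2 e2 with rfl | rfl | ⟨M', hM', hne, hne', hsum⟩
      · rcases hm U (hU.trans (Multiset.le_add_left _ _)) (by simpa using e1) with rfl | rfl
        · left; simp
        · exfalso
          have := Multiset.card_le_card hU
          have h3 : 0 < Multiset.card M := Multiset.card_pos.2 hM0
          rw [Multiset.card_add] at this
          omega
      · rw [hWs] at e1
        rcases hm (M + U) (by gcongr) (by rw [Multiset.sum_add, add_comm]; exact e1) with h | h
        · exfalso
          exact hM0 ((add_eq_zero.1 h).1)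
        · right
          rw [add_left_cancel h]
      · exfalso
        rcases hm (M' + U) (add_le_add hM' hU)
          (by rw [Multiset.sum_add, add_comm, ← hsum]; exact e1) with h | h
        · exact hne (add_eq_zero.1 h).1
        · have c1 := congrArg Multiset.card h
          have c2 := Multiset.card_le_card hM'
          have c3 := Multiset.card_le_card hU
          simp only [Multiset.card_add] at c1
          exact hne' (Multiset.eq_of_le_of_card_le hM' (by omega))
  · rw [Multiset.nodup_add]
    refine ⟨hn.map hf, hWn, ?_⟩
    rw [Multiset.disjoint_left]
    intro a ha haW
    obtain ⟨b, -, rfl⟩ := Multiset.mem_map.1 ha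
    exact hWK _ haW (by simp [f])

/-- `n - 2` distinct elements of `ZMod n` with given sum. -/
theorem aux_distinct2 {n : ℕ} (hn : 3 ≤ n) (v : ZMod n) :
    ∃ A : Multiset (ZMod n), A.Nodup ∧ Multiset.card A + 2 = n ∧ A.sum = v := by
  classical
  have : NeZero n := ⟨by omega⟩
  have : Fact (1 < n) := ⟨by omega⟩
  have : Fact (2 < n) := ⟨by omega⟩
  obtain ⟨x, y, hxy, hsum⟩ : ∃ x y : ZMod n, x ≠ y ∧
      x + y = (Finset.univ : Finset (ZMod n)).val.sum - v := by
    by_cases hw : (Finset.univ : Finset (ZMod n)).val.sum - v = 0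
    · exact ⟨1, -1, ZMod.neg_one_ne_one.symm, by rw [hw]; ring⟩
    · exact ⟨0, _, fun h => hw h.symm, zero_add _⟩
  obtain ⟨B, hB⟩ := Multiset.exists_cons_of_mem (Finset.mem_univ_val x)
  have hyB : y ∈ B := by
    have := Finset.mem_univ_val y
    rw [hB] at this
    rcases Multiset.mem_cons.1 this with h | h
    · exact absurd h.symm hxy
    · exact h
  obtain ⟨A, rfl⟩ := Multiset.exists_cons_of_mem hyB
  have hnd := (Finset.univ : Finset (ZMod n)).nodup
  have hcard : Multiset.card (Finset.univ : Finset (ZMod n)).val = n := by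
    rw [Finset.card_val, Finset.card_univ, ZMod.card]
  rw [hB] at hnd hcard hsum
  refine ⟨A, (Multiset.nodup_cons.1 (Multiset.nodup_cons.1 hnd).2).2, by simpa using hcard, ?_⟩
  simp only [Multiset.sum_cons] at hsum
  linear_combination -hsum

/-- `n - 1` distinct elements of `ZMod n` with given sum. -/
theorem aux_distinct1 {n : ℕ} (hn : 3 ≤ n) (v : ZMod n) :
    ∃ A : Multiset (ZMod n), A.Nodup ∧ Multiset.card A + 1 = n ∧ A.sum = v := by
  classical
  have : NeZero n := ⟨by omega⟩
  obtain ⟨A, hA⟩ := Multiset.exists_cons_of_mem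
    (Finset.mem_univ_val ((Finset.univ : Finset (ZMod n)).val.sum - v))
  have hnd := (Finset.univ : Finset (ZMod n)).nodup
  have hcard : Multiset.card (Finset.univ : Finset (ZMod n)).val = n := by
    rw [Finset.card_val, Finset.card_univ, ZMod.card]
  have hsum := congrArg Multiset.sum hA
  rw [hA] at hnd hcard
  refine ⟨A, (Multiset.nodup_cons.1 hnd).2, by simpa using hcard, ?_⟩
  rw [Multiset.sum_cons] at hsum
  linear_combination -hsum

/-- `n` distinct elements of `ZMod n × K` with given sum. -/
theorem aux_distinct0 {n : ℕ} (hn : 3 ≤ n) {K : Type*} [AddCommGroup K] (e : K) (he : e ≠ -e)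
    (g : ZMod n × K) :
    ∃ A : Multiset (ZMod n × K), A.Nodup ∧ Multiset.card A = n ∧ A.sum = g := by
  classical
  let f : ZMod n →+ ZMod n × K := AddMonoidHom.inl _ _
  have hf : Function.Injective f := fun a b h => by simpa [f] using congrArg Prod.fst h
  have he0 : e ≠ 0 := by rintro rfl; simp at he
  obtain ⟨a, κ⟩ := g
  by_cases hκ : κ = 0
  · subst hκ
    obtain ⟨A, h1, h2, h3⟩ := aux_distinct2 hn a
    refine ⟨(0, e) ::ₘ (0, -e) ::ₘ A.map f, ?_, by simpa using h2, ?_⟩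
    · simp [h1.map hf, he, f, he0.symm, he0]
    · rw [Multiset.sum_cons, Multiset.sum_cons, ← map_multiset_sum, h3]
      simp [f]
  · obtain ⟨A, h1, h2, h3⟩ := aux_distinct1 hn a
    refine ⟨(0, κ) ::ₘ A.map f, ?_, by simpa using h2, ?_⟩
    · simp [h1.map hf, f, Ne.symm hκ]
    · rw [Multiset.sum_cons, ← map_multiset_sum, h3]
      simp [f]

theorem aux_zmod {n : ℕ} (z : ℤ) (h : (z : ZMod n) = 0) (h1 : -(n : ℤ) < z) (h2 : z < 2 * n) :
    z = 0 ∨ z = n := by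
  rw [ZMod.intCast_zmod_eq_zero_iff_dvd] at h
  obtain ⟨c, rfl⟩ := h
  have hn : (0 : ℤ) < n := by omega
  have : -1 < c := by nlinarith
  have : c < 2 := by nlinarith
  interval_cases c <;> simp

/-- One more coordinate. -/
theorem aux_step {n : ℕ} (hn : 3 ≤ n) {G : Type*} [AddCommGroup G]
    (hG : ∀ g : G, ∃ A : Multiset G, A.Nodup ∧ Multiset.card A = n ∧ A.sum = g)
    {k m : ℕ} (h : AuxP G (k + 1) m) : AuxP (G × ZMod n) k (m + (n - 1)) := by
  classical
  have : Fact (1 < n) := ⟨by omega⟩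
  obtain ⟨S, D, h1, h2, h3, h4, rfl⟩ := h
  obtain ⟨g, S', D', rfl, h5, h6, h7⟩ := aux_pick h1.1 h2 h3 h4
  obtain ⟨A, hA1, hA2, hA3⟩ := hG g
  have hsum : ∀ U : Multiset G, (U.map fun x => (x, (1 : ZMod n))).sum
      = (U.sum, (Multiset.card U : ZMod n)) := by
    intro U
    induction U using Multiset.induction_on with
    | empty => simp; rfl
    | cons a U ih => simp [ih, add_comm]
  have hinj : Function.Injective fun x : G => (x, (1 : ZMod n)) := fun a b h => by
    simpa using h
  have := aux_replace (M := {g}) (K := ZMod n) (by simpa using h1) h5 h6 h7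
    (A.map fun x => (x, 1)) (hA1.map hinj)
    (by rw [Ne, Multiset.map_eq_zero, ← Multiset.card_eq_zero]; omega)
    (by
      intro w hw
      obtain ⟨b, -, rfl⟩ := Multiset.mem_map.1 hw
      simp) (by simp)
    (by rw [hsum, hA2, hA3]; simp)
    (by
      intro T hT hT0
      obtain ⟨U, hU, rfl⟩ := aux_le_map _ hT
      rw [hsum] at hT0
      have hc := Multiset.card_le_card hU
      rcases aux_zmod (Multiset.card U : ℤ) (by simpa using hT0) (by omega) (by omega) with h | h
      · left
        have : U = 0 := Multiset.card_eq_zero.1 (by omega)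
        simp [this]
      · right; left
        rw [Multiset.eq_of_le_of_card_le hU (by omega)])
  convert this using 1
  simp [hA2]
  omega

/-- Positive integers summing up to `n` give a minimal zero-sum sequence. -/
theorem aux_parts {n : ℕ} (hn : 0 < n) (N : Multiset ℕ) (hpos : ∀ x ∈ N, 0 < x)
    (hs : N.sum = n) : IsMinimalZeroSum (N.map (fun x : ℕ => (x : ZMod n))) := by
  classical
  have hcast : ∀ U : Multiset ℕ, (U.map (fun x : ℕ => (x : ZMod n))).sum = (U.sum : ZMod n) := by
    intro U
    exact (map_multiset_sum (Nat.castAddMonoidHom (ZMod n)) U).symm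
  have hz : ∀ U ≤ N, U.sum = 0 → U = 0 := by
    intro U hU h0
    by_contra hne
    obtain ⟨x, hx⟩ := Multiset.exists_mem_of_ne_zero hne
    have := hpos x (Multiset.mem_of_le hU hx)
    have := Multiset.le_sum_of_mem hx
    omega
  rw [aux_min_iff]
  refine ⟨?_, by rw [hcast, hs]; simp, ?_⟩
  · rw [Ne, Multiset.map_eq_zero]
    rintro rfl
    simp at hs
    omega
  · intro T hT hT0
    obtain ⟨U, hU, rfl⟩ := aux_le_map _ hT
    rw [hcast, ZMod.natCast_eq_zero_iff] at hT0
    obtain ⟨V, rfl⟩ := Multiset.le_iff_exists_add.1 hU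
    rw [Multiset.sum_add] at hs
    rcases Nat.eq_zero_or_pos U.sum with h | h
    · left; rw [hz U hU h]; simp
    · right
      have := Nat.le_of_dvd h hT0
      rw [hz V (Multiset.le_add_left _ _) (by omega), add_zero]

theorem aux_le_single {α : Type*} {x : α} {P : Multiset α} (h : P ≤ {x}) :
    ∃ p ≤ 1, P = Multiset.replicate p x := by
  rcases Multiset.le_singleton.1 h with rfl | rfl
  · exact ⟨0, by omega, by simp⟩
  · exact ⟨1, le_rfl, by simp⟩

theorem aux_sum_pair {G K : Type*} [AddCommGroup G] [AddCommGroup K] (c : K) (U : Multiset G) :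
    (U.map fun x => (x, c)).sum = (U.sum, Multiset.card U • c) := by
  induction U using Multiset.induction_on with
  | empty => simp; rfl
  | cons a U ih => simp [ih, add_comm, add_smul]

theorem aux_pair_inj {G K : Type*} (c : K) : Function.Injective fun x : G => (x, c) :=
  fun a b h => by simpa using h

theorem aux_sub_full {G : Type*} {A U : Multiset G} {n : ℕ} (hA : Multiset.card A + 2 = n)
    (hU : U ≤ A) (h : Multiset.card U + 2 = n) : U = A :=
  Multiset.eq_of_le_of_card_le hU (by omega)

theorem aux_arithB {n u v p q p' q' : ℕ} (hn : 3 ≤ n) (hu : u + 2 ≤ n) (hv : v + 2 ≤ n)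
    (hp : p ≤ 1) (hq : q ≤ 1) (hp' : p' ≤ 1) (hq' : q' ≤ 1)
    (h1 : (u + p + q + p' - q' : ℤ) = 0 ∨ (u + p + q + p' - q' : ℤ) = n)
    (h2 : (p - q + v + p' + q' : ℤ) = 0 ∨ (p - q + v + p' + q' : ℤ) = n) :
    (u = 0 ∧ p = 0 ∧ q = 0 ∧ v = 0 ∧ p' = 0 ∧ q' = 0) ∨
    (u + 2 = n ∧ p = 1 ∧ q = 1 ∧ v + 2 = n ∧ p' = 1 ∧ q' = 1) ∨
    (u = 0 ∧ p = 0 ∧ q = 0 ∧ v + 2 = n ∧ p' = 1 ∧ q' = 1) ∨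
    (u + 2 = n ∧ p = 1 ∧ q = 1 ∧ v = 0 ∧ p' = 0 ∧ q' = 0) ∨
    (u = 0 ∧ p = 0 ∧ q = 1 ∧ v = 0 ∧ p' = 0 ∧ q' = 1) ∨
    (u + 2 = n ∧ p = 1 ∧ q = 0 ∧ v + 2 = n ∧ p' = 1 ∧ q' = 0) ∨
    (u = 0 ∧ p = 1 ∧ q = 0 ∧ v + 2 = n ∧ p' = 0 ∧ q' = 1) ∨
    (u + 2 = n ∧ p = 0 ∧ q = 1 ∧ v = 0 ∧ p' = 1 ∧ q' = 0) := by
  interval_cases p <;> interval_cases q <;> interval_cases p' <;> interval_cases q' <;>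
    simp at h1 h2 ⊢ <;> omega

/-- Two more coordinates, for two distinct elements `g₁`, `g₂`. -/
theorem aux_two {n : ℕ} (hn : 3 ≤ n) {g1 g2 : ZMod n} {S' D' : Multiset (ZMod n)} {k : ℕ}
    (hg : g1 ≠ g2) (hmin : IsMinimalZeroSum ({g1} + {g2} + S')) (hD : D' ≤ S') (hnd : D'.Nodup)
    (hc : Multiset.card S' ≤ Multiset.card D' + k) :
    AuxP (ZMod n × (ZMod n × ZMod n)) k (Multiset.card S' + 2 * n) := by
  classical
  have : Fact (1 < n) := ⟨by omega⟩
  have : Fact (2 < n) := ⟨by omega⟩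
  have hne : (1 : ZMod n) ≠ -1 := ZMod.neg_one_ne_one.symm
  have hne' : (-1 : ZMod n) ≠ 1 := ZMod.neg_one_ne_one
  obtain ⟨A, hA1, hA2, hA3⟩ := aux_distinct2 hn g2
  obtain ⟨B, hB1, hB2, hB3⟩ := aux_distinct2 hn (g2 - g1)
  have hcW : Multiset.card (A.map (fun x => (x, ((1 : ZMod n), (0 : ZMod n)))) + {(g1 - g2, (1, 1))}
    + {(0, (1, -1))} + B.map (fun x => (x, ((0 : ZMod n), (1 : ZMod n)))) + {(0, (1, 1))}
    + {(g1, (-1, 1))}) = 2 * n := by simp; omega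
  rw [← hcW]
  refine aux_replace hmin hD hnd hc _ ?_ ?_ ?_ ?_ ?_ ?_
  · simp only [Multiset.nodup_add, hA1.map (aux_pair_inj _), hB1.map (aux_pair_inj _), Multiset.nodup_singleton, true_and,
      Multiset.disjoint_right]
    simp [hne, hne', hne.symm, hne'.symm, (sub_ne_zero.2 hg).symm, sub_ne_zero.2 hg]
  · intro h
    rw [h] at hcW
    simp at hcW
    omega
  · intro w hw
    simp only [Multiset.mem_add, Multiset.mem_map, Multiset.mem_singleton] at hw
    rcases hw with ((((⟨a, -, rfl⟩ | rfl) | rfl) | ⟨a, -, rfl⟩) | rfl) | rfl <;> simp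
  · simp
  · simp only [Multiset.sum_add, aux_sum_pair, Multiset.sum_singleton, hA3, hB3]
    have eA : ((Multiset.card A : ℕ) : ZMod n) + 2 = 0 := by
      have := congrArg (Nat.cast : ℕ → ZMod n) hA2
      simpa using this
    have eB : ((Multiset.card B : ℕ) : ZMod n) + 2 = 0 := by
      have := congrArg (Nat.cast : ℕ → ZMod n) hB2
      simpa using this
    ext
    · simp [add_comm]
    · simp; linear_combination eA
    · simp; linear_combination eB
  · intro T hT hT0
    obtain ⟨T1, Q', hS1, hQ', rfl⟩ := aux_le_add hT
    obtain ⟨T2, P', hS2, hP', rfl⟩ := aux_le_add hS1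
    obtain ⟨T3, V, hS3, hV0, rfl⟩ := aux_le_add hS2
    obtain ⟨T4, Q, hS4, hQ, rfl⟩ := aux_le_add hS3
    obtain ⟨U, P, hU0, hP, rfl⟩ := aux_le_add hS4
    obtain ⟨U, hU, rfl⟩ := aux_le_map _ hU0
    obtain ⟨V, hV, rfl⟩ := aux_le_map _ hV0
    obtain ⟨p, hp, rfl⟩ := aux_le_single hP
    obtain ⟨q, hq, rfl⟩ := aux_le_single hQ
    obtain ⟨p', hp', rfl⟩ := aux_le_single hP'
    obtain ⟨q', hq', rfl⟩ := aux_le_single hQ'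
    have hu := Multiset.card_le_card hU
    have hv := Multiset.card_le_card hV
    have hsum : ∀ U V : Multiset (ZMod n), ∀ p q p' q' : ℕ,
        (U.map (fun x => (x, ((1 : ZMod n), (0 : ZMod n)))) + replicate p (g1 - g2, (1, 1))
        + replicate q (0, (1, -1)) + V.map (fun x => (x, ((0 : ZMod n), (1 : ZMod n))))
        + replicate p' (0, (1, 1)) + replicate q' (g1, (-1, 1))).sum =
        (U.sum + p * (g1 - g2) + V.sum + q' * g1, (Multiset.card U + p + q + p' - q' : ZMod n),
          (p - q + Multiset.card V + p' + q' : ZMod n)) := by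
      intro U V p q p' q'
      simp only [Multiset.sum_add, aux_sum_pair, Multiset.sum_replicate]
      ext
      · simp
      · simp; ring
      · simp; ring
    rw [hsum] at hT0 ⊢
    simp only [Prod.mk_eq_zero] at hT0
    obtain ⟨e1, e2⟩ := hT0
    have f1 := aux_zmod (n := n) (Multiset.card U + p + q + p' - q') (by push_cast; exact e1)
      (by omega) (by omega)
    have f2 := aux_zmod (n := n) (p - q + Multiset.card V + p' + q') (by push_cast; exact e2)
      (by omega) (by omega)
    have hsubA : {g1} ≤ ({g1} + {g2} : Multiset (ZMod n)) := Multiset.le_add_right _ _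
    have hsubB : {g2} ≤ ({g1} + {g2} : Multiset (ZMod n)) := Multiset.le_add_left _ _
    have neA : {g1} ≠ ({g1} + {g2} : Multiset (ZMod n)) := fun h => by
      simpa using congrArg Multiset.card h
    have neB : {g2} ≠ ({g1} + {g2} : Multiset (ZMod n)) := fun h => by
      simpa using congrArg Multiset.card h
    have pick1 : U.sum + p * (g1 - g2) + V.sum + q' * g1 = g1 →
        ∃ M' ≤ ({g1} + {g2} : Multiset (ZMod n)), M' ≠ 0 ∧ M' ≠ {g1} + {g2} ∧
        U.sum + p * (g1 - g2) + V.sum + q' * g1 = M'.sum := fun h =>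
      ⟨{g1}, hsubA, by simp, neA, by rw [h]; simp⟩
    have pick2 : U.sum + p * (g1 - g2) + V.sum + q' * g1 = g2 →
        ∃ M' ≤ ({g1} + {g2} : Multiset (ZMod n)), M' ≠ 0 ∧ M' ≠ {g1} + {g2} ∧
        U.sum + p * (g1 - g2) + V.sum + q' * g1 = M'.sum := fun h =>
      ⟨{g2}, hsubB, by simp, neB, by rw [h]; simp⟩
    have U0 : Multiset.card U = 0 → U = 0 := Multiset.card_eq_zero.1
    have V0 : Multiset.card V = 0 → V = 0 := Multiset.card_eq_zero.1
    have UA := aux_sub_full hA2 hU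
    have VB := aux_sub_full hB2 hV
    rcases aux_arithB hn (by omega) (by omega) hp hq hp' hq' f1 f2 with
      ⟨c1, rfl, rfl, c2, rfl, rfl⟩ | ⟨c1, rfl, rfl, c2, rfl, rfl⟩ | ⟨c1, rfl, rfl, c2, rfl, rfl⟩ |
      ⟨c1, rfl, rfl, c2, rfl, rfl⟩ | ⟨c1, rfl, rfl, c2, rfl, rfl⟩ | ⟨c1, rfl, rfl, c2, rfl, rfl⟩ |
      ⟨c1, rfl, rfl, c2, rfl, rfl⟩ | ⟨c1, rfl, rfl, c2, rfl, rfl⟩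
    · left; rw [U0 c1, V0 c2]; simp
    · right; left; rw [UA c1, VB c2]; simp
    · right; right; apply pick2; rw [U0 c1, VB c2, hB3]; simp
    · right; right; apply pick1; rw [UA c1, V0 c2, hA3]; simp
    · right; right; apply pick1; rw [U0 c1, V0 c2]; simp
    · right; right; apply pick2; rw [UA c1, VB c2, hA3, hB3]; simp
    · right; right; apply pick1; rw [U0 c1, VB c2, hB3]; simp
    · right; right; apply pick2; rw [UA c1, V0 c2, hA3]; simp

theorem aux_arithC {n u v w p q p' q' p'' q'' : ℕ} (hn : 3 ≤ n) (hu : u + 2 ≤ n)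
    (hv : v + 2 ≤ n) (hw : w + 2 ≤ n)
    (hp : p ≤ 1) (hq : q ≤ 1) (hp' : p' ≤ 1) (hq' : q' ≤ 1) (hp'' : p'' ≤ 1) (hq'' : q'' ≤ 1)
    (h1 : (u + p + q + p'' - q'' : ℤ) = 0 ∨ (u + p + q + p'' - q'' : ℤ) = n)
    (h2 : (v + p' + q' + p - q : ℤ) = 0 ∨ (v + p' + q' + p - q : ℤ) = n)
    (h3 : (w + p'' + q'' + p' - q' : ℤ) = 0 ∨ (w + p'' + q'' + p' - q' : ℤ) = n) :
    (u = 0 ∨ u + 2 = n) ∧ (v = 0 ∨ v + 2 = n) ∧ (w = 0 ∨ w + 2 = n) ∧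
    (u = 0 → v = 0 → q'' = 0 → w = 0 ∧ p = 0 ∧ q = 0 ∧ p' = 0 ∧ q' = 0 ∧ p'' = 0) ∧
    (u + 2 = n → v + 2 = n → q'' = 1 →
      w + 2 = n ∧ p = 1 ∧ q = 1 ∧ p' = 1 ∧ q' = 1 ∧ p'' = 1) := by
  interval_cases p <;> interval_cases q <;> interval_cases p' <;> interval_cases q' <;>
    interval_cases p'' <;> interval_cases q'' <;> simp at h1 h2 h3 ⊢ <;> omega

/-- Three more coordinates. -/
theorem aux_three {n : ℕ} (hn : 3 ≤ n) {g1 g2 g3 : ZMod n} {S' D' : Multiset (ZMod n)} {k : ℕ}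
    (hmin : IsMinimalZeroSum ({g1} + {g2} + {g3} + S')) (hD : D' ≤ S') (hnd : D'.Nodup)
    (hc : Multiset.card S' ≤ Multiset.card D' + k) :
    AuxP (ZMod n × (ZMod n × ZMod n × ZMod n)) k (Multiset.card S' + 3 * n) := by
  classical
  have : Fact (1 < n) := ⟨by omega⟩
  have : Fact (2 < n) := ⟨by omega⟩
  have hne : (1 : ZMod n) ≠ -1 := ZMod.neg_one_ne_one.symm
  have hne' : (-1 : ZMod n) ≠ 1 := ZMod.neg_one_ne_one
  obtain ⟨A, hA1, hA2, hA3⟩ := aux_distinct2 hn g1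
  obtain ⟨B, hB1, hB2, hB3⟩ := aux_distinct2 hn g2
  obtain ⟨C, hC1, hC2, hC3⟩ := aux_distinct2 hn (0 : ZMod n)
  have hcW : Multiset.card (
    A.map (fun x => (x, ((1 : ZMod n), (0 : ZMod n), (0 : ZMod n)))) + {(0, (1, 1, 0))}
    + {(0, (1, -1, 0))}
    + B.map (fun x => (x, ((0 : ZMod n), (1 : ZMod n), (0 : ZMod n)))) + {(0, (0, 1, 1))}
    + {(0, (0, 1, -1))}
    + C.map (fun x => (x, ((0 : ZMod n), (0 : ZMod n), (1 : ZMod n)))) + {(0, (1, 0, 1))}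
    + {(g3, (-1, 0, 1))}) = 3 * n := by simp; omega
  rw [← hcW]
  refine aux_replace hmin hD hnd hc _ ?_ ?_ ?_ ?_ ?_ ?_
  · simp only [Multiset.nodup_add, hA1.map (aux_pair_inj _), hB1.map (aux_pair_inj _), hC1.map (aux_pair_inj _),
      Multiset.nodup_singleton, true_and, Multiset.disjoint_right]
    simp [hne, hne']
  · intro h
    rw [h] at hcW
    simp at hcW
    omega
  · intro w hw
    simp only [Multiset.mem_add, Multiset.mem_map, Multiset.mem_singleton] at hw
    rcases hw with (((((((⟨a, -, rfl⟩ | rfl) | rfl) | ⟨a, -, rfl⟩) | rfl) | rfl) |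
      ⟨a, -, rfl⟩) | rfl) | rfl <;> simp
  · simp
  · simp only [Multiset.sum_add, aux_sum_pair, Multiset.sum_singleton, hA3, hB3, hC3]
    have eA : ((Multiset.card A : ℕ) : ZMod n) + 2 = 0 := by
      have := congrArg (Nat.cast : ℕ → ZMod n) hA2
      simpa using this
    have eB : ((Multiset.card B : ℕ) : ZMod n) + 2 = 0 := by
      have := congrArg (Nat.cast : ℕ → ZMod n) hB2
      simpa using this
    have eC : ((Multiset.card C : ℕ) : ZMod n) + 2 = 0 := by
      have := congrArg (Nat.cast : ℕ → ZMod n) hC2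
      simpa using this
    ext
    · simp
    · simp; linear_combination eA
    · simp; linear_combination eB
    · simp; linear_combination eC
  · intro T hT hT0
    obtain ⟨T1, Q'', hS1, hQ'', rfl⟩ := aux_le_add hT
    obtain ⟨T2, P'', hS2, hP'', rfl⟩ := aux_le_add hS1
    obtain ⟨T3, V', hS3, hV', rfl⟩ := aux_le_add hS2
    obtain ⟨T4, Q', hS4, hQ', rfl⟩ := aux_le_add hS3
    obtain ⟨T5, P', hS5, hP', rfl⟩ := aux_le_add hS4
    obtain ⟨T6, V, hS6, hV0, rfl⟩ := aux_le_add hS5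
    obtain ⟨T7, Q, hS7, hQ, rfl⟩ := aux_le_add hS6
    obtain ⟨U, P, hU0, hP, rfl⟩ := aux_le_add hS7
    obtain ⟨U, hU, rfl⟩ := aux_le_map _ hU0
    obtain ⟨V, hV, rfl⟩ := aux_le_map _ hV0
    obtain ⟨X, hX, rfl⟩ := aux_le_map _ hV'
    obtain ⟨p, hp, rfl⟩ := aux_le_single hP
    obtain ⟨q, hq, rfl⟩ := aux_le_single hQ
    obtain ⟨p', hp', rfl⟩ := aux_le_single hP'
    obtain ⟨q', hq', rfl⟩ := aux_le_single hQ'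
    obtain ⟨p'', hp'', rfl⟩ := aux_le_single hP''
    obtain ⟨q'', hq'', rfl⟩ := aux_le_single hQ''
    have hu := Multiset.card_le_card hU
    have hv := Multiset.card_le_card hV
    have hx := Multiset.card_le_card hX
    have hsum : (
        U.map (fun x => (x, ((1 : ZMod n), (0 : ZMod n), (0 : ZMod n))))
        + replicate p (0, (1, 1, 0)) + replicate q (0, (1, -1, 0))
        + V.map (fun x => (x, ((0 : ZMod n), (1 : ZMod n), (0 : ZMod n))))
        + replicate p' (0, (0, 1, 1)) + replicate q' (0, (0, 1, -1))
        + X.map (fun x => (x, ((0 : ZMod n), (0 : ZMod n), (1 : ZMod n))))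
        + replicate p'' (0, (1, 0, 1)) + replicate q'' (g3, (-1, 0, 1))).sum =
        (U.sum + V.sum + X.sum + q'' * g3,
          (Multiset.card U + p + q + p'' - q'' : ZMod n),
          (Multiset.card V + p' + q' + p - q : ZMod n),
          (Multiset.card X + p'' + q'' + p' - q' : ZMod n)) := by
      simp only [Multiset.sum_add, aux_sum_pair, Multiset.sum_replicate]
      ext
      · simp
      · simp; ring
      · simp; ring
      · simp; ring
    rw [hsum] at hT0 ⊢
    simp only [Prod.mk_eq_zero] at hT0
    obtain ⟨e1, e2, e3⟩ := hT0
    have f1 := aux_zmod (n := n) (Multiset.card U + p + q + p'' - q'') (by push_cast; exact e1)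
      (by omega) (by omega)
    have f2 := aux_zmod (n := n) (Multiset.card V + p' + q' + p - q) (by push_cast; exact e2)
      (by omega) (by omega)
    have f3 := aux_zmod (n := n) (Multiset.card X + p'' + q'' + p' - q') (by push_cast; exact e3)
      (by omega) (by omega)
    obtain ⟨hu', hv', hw', hz, hf⟩ := aux_arithC hn (by omega) (by omega) (by omega)
      hp hq hp' hq' hp'' hq'' f1 f2 f3
    have X0 : X.sum = 0 := by
      rcases hw' with h | h
      · rw [Multiset.card_eq_zero.1 h]; simp
      · rw [aux_sub_full hC2 hX h, hC3]
    have pick : ∀ M' M'' : Multiset (ZMod n), {g1} + {g2} + {g3} = M' + M'' → M' ≠ 0 →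
        M'' ≠ 0 → U.sum + V.sum + X.sum + q'' * g3 = M'.sum →
        ∃ M' ≤ ({g1} + {g2} + {g3} : Multiset (ZMod n)), M' ≠ 0 ∧ M' ≠ {g1} + {g2} + {g3} ∧
        U.sum + V.sum + X.sum + q'' * g3 = M'.sum := by
      intro M' M'' h1 h2 h3 h4
      refine ⟨M', by rw [h1]; exact Multiset.le_add_right _ _, h2, ?_, h4⟩
      intro h
      rw [h1] at h
      exact h3 (by simpa using h)
    have hq3 : q'' = 0 ∨ q'' = 1 := by omega
    rcases hu' with hu' | hu' <;> rcases hv' with hv' | hv' <;> rcases hq3 with hq3 | hq3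
    · obtain ⟨c1, rfl, rfl, rfl, rfl, rfl⟩ := hz hu' hv' hq3
      subst hq3
      left
      rw [Multiset.card_eq_zero.1 hu', Multiset.card_eq_zero.1 hv', Multiset.card_eq_zero.1 c1]
      simp
    · right; right
      refine pick {g3} ({g1} + {g2}) (by abel) (by simp) (by simp) ?_
      rw [X0, Multiset.card_eq_zero.1 hu', Multiset.card_eq_zero.1 hv', hq3]; simp
    · right; right
      refine pick {g2} ({g1} + {g3}) (by abel) (by simp) (by simp) ?_
      rw [X0, Multiset.card_eq_zero.1 hu', aux_sub_full hB2 hV hv', hB3, hq3]; simp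
    · right; right
      refine pick ({g2} + {g3}) {g1} (by abel) (by simp) (by simp) ?_
      rw [X0, Multiset.card_eq_zero.1 hu', aux_sub_full hB2 hV hv', hB3, hq3]; simp
    · right; right
      refine pick {g1} ({g2} + {g3}) (by abel) (by simp) (by simp) ?_
      rw [X0, aux_sub_full hA2 hU hu', Multiset.card_eq_zero.1 hv', hA3, hq3]; simp
    · right; right
      refine pick ({g1} + {g3}) {g2} (by abel) (by simp) (by simp) ?_
      rw [X0, aux_sub_full hA2 hU hu', Multiset.card_eq_zero.1 hv', hA3, hq3]; simp
    · right; right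
      refine pick ({g1} + {g2}) {g3} (by abel) (by simp) (by simp) ?_
      rw [X0, aux_sub_full hA2 hU hu', aux_sub_full hB2 hV hv', hA3, hB3, hq3]; simp
    · obtain ⟨c1, rfl, rfl, rfl, rfl, rfl⟩ := hf hu' hv' hq3
      subst hq3
      right; left
      rw [aux_sub_full hA2 hU hu', aux_sub_full hB2 hV hv', aux_sub_full hC2 hX c1]
      simp

theorem aux_steps {n : ℕ} (hn : 3 ≤ n) (j : ℕ) : ∀ k m : ℕ,
    AuxP (ZMod n × (Fin 3 → ZMod n)) (k + j) m →
    AuxP (ZMod n × (Fin (3 + j) → ZMod n)) k (m + j * (n - 1)) := by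
  have : Fact (1 < n) := ⟨by omega⟩
  have : Fact (2 < n) := ⟨by omega⟩
  induction j with
  | zero => intro k m h; simpa using h
  | succ j ih =>
    intro k m h
    have h1 := ih (k + 1) m (by convert h using 1; omega)
    have h2 := aux_step hn (aux_distinct0 hn (K := Fin (3 + j) → ZMod n) (fun _ => 1)
      (fun h => ZMod.neg_one_ne_one (congrFun h ⟨0, by omega⟩).symm)) h1
    let f : (ZMod n × (Fin (3 + j) → ZMod n)) × ZMod n →+
        ZMod n × (Fin (3 + (j + 1)) → ZMod n) :=
      { toFun := fun x => (x.1.1, (Fin.cons x.2 x.1.2 : Fin (3 + j + 1) → ZMod n))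
        map_zero' := by
          ext i
          · simp
          · refine Fin.cases ?_ (fun i => ?_) i <;> simp
        map_add' := by
          intro x y
          ext i
          · simp
          · refine Fin.cases (n := 3 + j) ?_ (fun i => ?_) i <;> simp }
    have hf : Function.Injective f := by
      rintro ⟨⟨a, b⟩, c⟩ ⟨⟨a', b'⟩, c'⟩ h
      have h1 : a = a' := congrArg Prod.fst h
      have h2 : (Fin.cons c b : Fin (3 + j + 1) → ZMod n) = Fin.cons c' b' := congrArg Prod.snd h
      obtain ⟨h3, h4⟩ := Fin.cons_inj.1 h2
      rw [h1, h3, h4]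
    have h3 := aux_transport f hf h2
    have e : m + (j + 1) * (n - 1) = m + j * (n - 1) + (n - 1) := by ring
    rw [e]
    exact h3

theorem aux_cons {n : ℕ} {j k m : ℕ} (h : AuxP (ZMod n × (Fin j → ZMod n)) k m) :
    AuxP (Fin (j + 1) → ZMod n) k m := by
  let f : ZMod n × (Fin j → ZMod n) →+ (Fin (j + 1) → ZMod n) :=
    { toFun := fun x => (Fin.cons x.1 x.2 : Fin (j + 1) → ZMod n)
      map_zero' := by
        ext i
        refine Fin.cases ?_ (fun i => ?_) i <;> simp
      map_add' := by
        intro x y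
        ext i
        refine Fin.cases ?_ (fun i => ?_) i <;> simp }
  have hf : Function.Injective f := by
    rintro ⟨a, b⟩ ⟨a', b'⟩ h
    obtain ⟨h3, h4⟩ := Fin.cons_inj.1 (show (Fin.cons a b : Fin (j + 1) → ZMod n)
      = Fin.cons a' b' from h)
    rw [h3, h4]
  exact aux_transport f hf h

theorem aux_fin2 {n k m : ℕ} (h : AuxP (ZMod n × (ZMod n × ZMod n)) k m) :
    AuxP (ZMod n × (Fin 2 → ZMod n)) k m := by
  let f : ZMod n × (ZMod n × ZMod n) →+ ZMod n × (Fin 2 → ZMod n) :=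
    { toFun := fun x => (x.1, ![x.2.1, x.2.2])
      map_zero' := by
        ext i
        · simp
        · fin_cases i <;> simp
      map_add' := by
        intro x y
        ext i
        · simp
        · fin_cases i <;> simp }
  have hf : Function.Injective f := by
    rintro ⟨a, b, c⟩ ⟨a', b', c'⟩ h
    have h1 : a = a' := congrArg Prod.fst h
    have h2 : b = b' := congrFun (congrArg Prod.snd h) 0
    have h3 : c = c' := congrFun (congrArg Prod.snd h) 1
    rw [h1, h2, h3]
  exact aux_transport f hf h

theorem aux_fin3 {n k m : ℕ} (h : AuxP (ZMod n × (ZMod n × ZMod n × ZMod n)) k m) :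
    AuxP (ZMod n × (Fin 3 → ZMod n)) k m := by
  let f : ZMod n × (ZMod n × ZMod n × ZMod n) →+ ZMod n × (Fin 3 → ZMod n) :=
    { toFun := fun x => (x.1, ![x.2.1, x.2.2.1, x.2.2.2])
      map_zero' := by
        ext i
        · simp
        · fin_cases i <;> simp
      map_add' := by
        intro x y
        ext i
        · simp
        · fin_cases i <;> simp }
  have hf : Function.Injective f := by
    rintro ⟨a, b, c, d⟩ ⟨a', b', c', d'⟩ h
    have h1 : a = a' := congrArg Prod.fst h
    have h2 : b = b' := congrFun (congrArg Prod.snd h) 0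
    have h3 : c = c' := congrFun (congrArg Prod.snd h) 1
    have h4 : d = d' := congrFun (congrArg Prod.snd h) 2
    rw [h1, h2, h3, h4]
  exact aux_transport f hf h

theorem aux_part1 {n r k : ℕ} (hn : 3 ≤ n) (hr : 4 ≤ r) :
    SDk (ZMod n) (k + r - 1) + (r - 1) * (n - 1) ≤ SDk (Fin r → ZMod n) k := by
  have : NeZero n := ⟨by omega⟩
  obtain ⟨j, rfl⟩ : ∃ j, r = 3 + j + 1 := ⟨r - 4, by omega⟩
  have hex : AuxP (ZMod n) (k + (3 + j + 1) - 1) 3 := by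
    refine ⟨({1, 1, n - 2} : Multiset ℕ).map (fun x : ℕ => (x : ZMod n)), 0,
      aux_parts (by omega) _ ?_ ?_, Multiset.zero_le _, Multiset.nodup_zero, ?_, ?_⟩
    · intro x hx
      simp at hx
      omega
    · simp; omega
    · simp; omega
    · simp
  have h3 := aux_le_SDk hex
  obtain ⟨S, D, h1, h2, h5, h4, hS⟩ := aux_SDk_mem hex
  rw [← hS] at h3 ⊢
  apply aux_le_SDk
  have e : k + (3 + j + 1) - 1 = k + j + 1 + 1 + 1 := by omega
  rw [e] at h4
  obtain ⟨g1, S1, D1, rfl, a1, a2, a3⟩ := aux_pick h1.1 h2 h5 h4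
  rw [Multiset.card_cons] at h3
  obtain ⟨g2, S2, D2, rfl, b1, b2, b3⟩ := aux_pick (Multiset.card_pos.1 (by omega)) a1 a2 a3
  rw [Multiset.card_cons] at h3
  obtain ⟨g3, S3, D3, rfl, c1, c2, c3⟩ := aux_pick (Multiset.card_pos.1 (by omega)) b1 b2 b3
  have key := aux_cons (aux_steps hn j k _ (aux_fin3 (aux_three hn (g1 := g1) (g2 := g2) (g3 := g3)
    (by simpa [add_assoc] using h1) c1 c2 c3)))
  have e2 : Multiset.card (g1 ::ₘ g2 ::ₘ g3 ::ₘ S3) + (3 + j + 1 - 1) * (n - 1)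
      = Multiset.card S3 + 3 * n + j * (n - 1) := by
    rw [Multiset.card_cons, Multiset.card_cons, Multiset.card_cons, Nat.add_sub_cancel, add_mul]
    omega
  rw [e2]
  exact key

theorem aux_part2 {n r k : ℕ} (hn : 3 ≤ n) (hr : 4 ≤ r)
    (hD : DavenportD (Fin r → ZMod n) = 1 + r * (n - 1)) (hk : n ≤ r + k) :
    SDk (Fin r → ZMod n) k = 1 + r * (n - 1) := by
  have : NeZero n := ⟨by omega⟩
  apply le_antisymm
  · rw [← hD]
    unfold SDk SDpair DavenportD
    apply csSup_le'
    rintro m ⟨S, h1, -, h3⟩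
    refine le_csSup ⟨Nat.card (Fin r → ZMod n), ?_⟩ ⟨S, h1, h3⟩
    rintro m ⟨S, h1, rfl⟩
    exact aux_card_le S h1
  · have hex : AuxP (ZMod n) (k + r - 1) n := by
      refine ⟨(replicate n 1).map (fun x : ℕ => (x : ZMod n)), {1},
        aux_parts (by omega) _ ?_ ?_, ?_, Multiset.nodup_singleton _, ?_, ?_⟩
      · intro x hx
        rw [Multiset.eq_of_mem_replicate hx]; omega
      · simp
      · rw [Multiset.singleton_le, Multiset.mem_map]
        exact ⟨1, Multiset.mem_replicate.2 ⟨by omega, rfl⟩, by simp⟩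
      · simp; omega
      · simp
    have h1 := aux_le_SDk hex
    have h2 := aux_part1 (k := k) hn hr
    obtain ⟨n', rfl⟩ : ∃ n', n = n' + 1 := ⟨n - 1, by omega⟩
    obtain ⟨r', rfl⟩ : ∃ r', r = r' + 1 := ⟨r - 1, by omega⟩
    simp only [Nat.add_sub_cancel] at h2 ⊢
    rw [add_mul]
    omega

theorem aux_rank3 {n k : ℕ} (hn : 3 ≤ n) (N D : Multiset ℕ) (hpos : ∀ x ∈ N, 0 < x)
    (hs : N.sum + 3 = n) (hD : D ≤ N) (hnd : D.Nodup)
    (hc : Multiset.card N ≤ Multiset.card D + k) :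
    Multiset.card N + 2 * n ≤ SDk (Fin 3 → ZMod n) k := by
  have : NeZero n := ⟨by omega⟩
  apply aux_le_SDk
  have hinj : ∀ x < n, ∀ y < n, (x : ZMod n) = y → x = y := by
    intro x hx y hy h
    rwa [ZMod.natCast_eq_natCast_iff', Nat.mod_eq_of_lt hx, Nat.mod_eq_of_lt hy] at h
  have h12 : ((1 : ℕ) : ZMod n) ≠ ((2 : ℕ) : ZMod n) := by
    intro h
    have := hinj 1 (by omega) 2 (by omega) h
    omega
  have hmin := aux_parts (n := n) (by omega) ({1} + {2} + N) (by
    intro x hx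
    simp only [Multiset.mem_add, Multiset.mem_singleton] at hx
    rcases hx with (rfl | rfl) | hx
    · omega
    · omega
    · exact hpos x hx) (by simp; omega)
  rw [Multiset.map_add, Multiset.map_add, Multiset.map_singleton, Multiset.map_singleton] at hmin
  have hlt : ∀ x ∈ N, x < n := fun x hx => by
    have := Multiset.le_sum_of_mem hx
    omega
  have := aux_cons (aux_fin2 (aux_two hn h12 hmin (D' := D.map (fun x : ℕ => (x : ZMod n)))
    (Multiset.map_le_map hD) (hnd.map_on (fun x hx y hy h =>
      hinj x (hlt x (Multiset.mem_of_le hD hx)) y (hlt y (Multiset.mem_of_le hD hy)) h))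
    (by simpa using hc)))
  simpa using this

theorem aux_part3 {n k : ℕ} (hn : 3 ≤ n) :
    ((1 + 3 * ((n : ℤ) - 1)) -
        max 1 ((n : ℤ) - k - 2 -
          ⌊(-1 + Real.sqrt (((1 + 8 * max ((n : ℤ) - 3 - k) 0 : ℤ)) : ℝ)) / 2⌋) ≤
      (SDk (Fin 3 → ZMod n) k : ℤ)) := by
  by_cases hk : n ≤ k + 3
  · have h := aux_rank3 (k := k) hn (replicate (n - 3) 1) 0
      (fun x hx => by rw [Multiset.eq_of_mem_replicate hx]; omega)
      (by simp; omega) (Multiset.zero_le _) Multiset.nodup_zero (by simp; omega)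
    rw [Multiset.card_replicate] at h
    have := le_max_left (1 : ℤ) ((n : ℤ) - k - 2 -
          ⌊(-1 + Real.sqrt (((1 + 8 * max ((n : ℤ) - 3 - k) 0 : ℤ)) : ℝ)) / 2⌋)
    omega
  · obtain ⟨M, hM⟩ : ∃ M : ℕ, n = k + 3 + (M + 1) := ⟨n - k - 4, by omega⟩
    have hmax : max ((n : ℤ) - 3 - k) 0 = (M : ℤ) + 1 := by
      rw [max_eq_left] <;> omega
    rw [hmax]
    set x : ℝ := Real.sqrt ((1 + 8 * ((M : ℤ) + 1) : ℤ) : ℝ) with hx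
    have hx2 : x ^ 2 = 1 + 8 * ((M : ℝ) + 1) := by
      rw [hx, Real.sq_sqrt (by positivity)]
      push_cast; ring
    have hx0 : 0 ≤ x := Real.sqrt_nonneg _
    set t : ℤ := ⌊(-1 + x) / 2⌋ with ht
    have ht1 : 1 ≤ t := by
      rw [ht, Int.le_floor]
      have : (3 : ℝ) ≤ x := by
        have : (0 : ℝ) ≤ M := Nat.cast_nonneg M
        nlinarith
      push_cast
      linarith
    have htl : (t : ℝ) ≤ (-1 + x) / 2 := Int.floor_le _
    have htM : t * (t + 1) ≤ 2 * ((M : ℤ) + 1) := by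
      have h0 : (1 : ℝ) ≤ t := by exact_mod_cast ht1
      have : (t : ℝ) * (t + 1) ≤ 2 * ((M : ℝ) + 1) := by nlinarith
      exact_mod_cast this
    obtain ⟨q, hq⟩ : ∃ q : ℕ, t = q + 1 := ⟨(t - 1).toNat, by omega⟩
    rw [hq] at htM ⊢
    have hsumq : 2 * (∑ i ∈ Finset.range q, (i + 1)) = q * (q + 1) := by
      clear * -
      induction q with
      | zero => simp
      | succ q ih => rw [Finset.sum_range_succ, mul_add, ih]; ring
    set s := ∑ i ∈ Finset.range q, (i + 1) with hs
    have hsM : s + q + 1 ≤ M + 1 := by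
      have : ((q : ℤ) + 1) * (q + 1 + 1) = 2 * s + 2 * q + 2 := by
        have : (2 * s : ℤ) = q * (q + 1) := by exact_mod_cast hsumq
        rw [this]; ring
      rw [this] at htM
      omega
    let D : Multiset ℕ := (M + 1 - s) ::ₘ ((Multiset.range q).map (fun i => i + 1))
    have hDc : Multiset.card D = q + 1 := by simp [D]
    have hDs : D.sum = M + 1 := by
      have : ((Multiset.range q).map (fun i => i + 1)).sum = s := rfl
      simp only [D, Multiset.sum_cons, this]
      omega
    have h := aux_rank3 (k := k) hn (replicate k 1 + D) D
      (by
        intro x hx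
        simp only [D, Multiset.mem_add, Multiset.mem_cons, Multiset.mem_map] at hx
        rcases hx with hx | rfl | ⟨i, -, rfl⟩
        · rw [Multiset.eq_of_mem_replicate hx]; omega
        · omega
        · omega)
      (by rw [Multiset.sum_add, hDs]; simp; omega) (Multiset.le_add_left _ _)
      (by
        simp only [D, Multiset.nodup_cons]
        refine ⟨?_, (Multiset.nodup_range q).map (fun a b h => by simpa using h)⟩
        intro h
        obtain ⟨i, hi, h⟩ := Multiset.mem_map.1 h
        rw [Multiset.mem_range] at hi
        omega)
      (by simp; omega)
    rw [Multiset.card_add, Multiset.card_replicate, hDc] at h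
    have := le_max_right (1 : ℤ) ((n : ℤ) - k - 2 - ((q : ℤ) + 1))
    omega

/-- Theorem (homocyclic groups): let `n ≥ 3`, `r ≥ 4` and `k ∈ ℕ₀`. Then
`SD_k(C_n^r) ≥ SD_{k+r−1}(C_n) + (r−1)(n−1)`. Moreover, if
`D(C_n^r) = D*(C_n^r)` and `r ≥ n − k`, then `SD_k(C_n^r) = D*(C_n^r)`.
Additionally,
`SD_k(C_n^3) ≥ D*(C_n^3) − max{1, n − k − 2 − ⌊(−1 + √(1 + 8·max{n−3−k,0}))/2⌋}`. -/
theorem SDk_homocyclic_bounds (n r k : ℕ) (hn : 3 ≤ n) (hr : 4 ≤ r) :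
    (SDk (ZMod n) (k + r - 1) + (r - 1) * (n - 1) ≤ SDk (Fin r → ZMod n) k) ∧
    (DavenportD (Fin r → ZMod n) = 1 + r * (n - 1) → n ≤ r + k →
      SDk (Fin r → ZMod n) k = 1 + r * (n - 1)) ∧
    ((1 + 3 * ((n : ℤ) - 1)) -
        max 1 ((n : ℤ) - k - 2 -
          ⌊(-1 + Real.sqrt (((1 + 8 * max ((n : ℤ) - 3 - k) 0 : ℤ)) : ℝ)) / 2⌋) ≤
      (SDk (Fin 3 → ZMod n) k : ℤ)) := 
  ⟨aux_part1 hn hr, aux_part2 hn hr, aux_part3 hn⟩
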